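/- For every ASP program module P = ⟨R, I, O, H⟩ and every set S of atoms, the Project operation does not change the stable models but restricts the visible signature to S: AS(P|_S) = AS(P) and At_v(P|_S) = At_v(P) ∩ S. -/

import Mathlib

open scoped Classical

noncomputable section

/-- A rule: an optional head atom (none = integrity constraint), a flag marking
choice facts, a set of positive body atoms and a set of negative body atoms. -/
structure ASPRule (A : Type*) where
  head : Option A
  isChoice : Bool
  pos : Set A
  neg : Set A

/-- Atoms occurring in a rule. -/
def ASPRule.atoms {A : Type*} (r : ASPRule A) : Set A :=
  (r.head.elim ∅ fun a => {a}) ∪ r.pos ∪ r.neg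

/-- Atoms occurring in a program. -/
def progAtoms {A : Type*} (R : Set (ASPRule A)) : Set A :=
  ⋃ r ∈ R, r.atoms

/-- Least model of a positive program (pairs of head and positive body):
the least set of atoms closed under the rules. -/
def LM {A : Type*} (Q : Set (A × Set A)) : Set A :=
  ⋂₀ {S | ∀ p ∈ Q, p.2 ⊆ S → p.1 ∈ S}

/-- The reduct of a program w.r.t. an interpretation `M`: it contains
`head(r) ← body⁺(r)` for every headed non-choice rule whose negative body is
disjoint from `M`, and the fact `a` for every choice fact `{a}` with `a ∈ M`. -/
def reduct {A : Type*} (R : Set (ASPRule A)) (M : Set A) : Set (A × Set A) :=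
  {p | ∃ r ∈ R,
    (r.isChoice = false ∧ r.head = some p.1 ∧ r.pos = p.2 ∧ r.neg ∩ M = ∅) ∨
    (r.isChoice = true ∧ r.head = some p.1 ∧ p.2 = (∅ : Set A) ∧ p.1 ∈ M)}

/-- `M` is a stable model of program `R`: `M = LM(R^M)` and every integrity
constraint whose negative body avoids `M` has a positive body not contained in `M`. -/
def stableModel {A : Type*} (R : Set (ASPRule A)) (M : Set A) : Prop :=
  M = LM (reduct R M) ∧
  ∀ r ∈ R, r.head = none → r.neg ∩ M = ∅ → ¬ r.pos ⊆ M

/-- Facts for a set of (input) atoms. -/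
def inputFacts {A : Type*} (X : Set A) : Set (ASPRule A) :=
  {r | ∃ a ∈ X, r = ⟨some a, false, ∅, ∅⟩}

/-- Choice facts `{a}` for a set of atoms. -/
def choiceFacts {A : Type*} (X : Set A) : Set (ASPRule A) :=
  {r | ∃ a ∈ X, r = ⟨some a, true, ∅, ∅⟩}

/-- An (unbundled) ASP program module `⟨R, I, O, H⟩`. -/
structure PreModule (A : Type*) where
  rules : Set (ASPRule A)
  I : Set A
  O : Set A
  H : Set A

namespace PreModule

variable {A : Type*}

/-- `At(P) = I ∪ O ∪ H`. -/
def atoms (P : PreModule A) : Set A := P.I ∪ P.O ∪ P.H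

/-- Visible atoms `At_v(P) = I ∪ O`. -/
def Atv (P : PreModule A) : Set A := P.I ∪ P.O

/-- Well-formedness of a module: `I`, `O`, `H` pairwise disjoint, the atoms
of the rules lie in `At(P)`, and no rule head is an input atom. -/
def wf (P : PreModule A) : Prop :=
  Disjoint P.I P.O ∧ Disjoint P.I P.H ∧ Disjoint P.O P.H ∧
  progAtoms P.rules ⊆ P.atoms ∧
  ∀ r ∈ P.rules, ∀ a, r.head = some a → a ∉ P.I

/-- Stable models of a module: `M ⊆ At(P)` that are stable models of the rules
together with a fact for every true input atom. -/
def AS (P : PreModule A) : Set (Set A) :=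
  {M | M ⊆ P.atoms ∧ stableModel (P.rules ∪ inputFacts (M ∩ P.I)) M}

end PreModule

/-- Edge of the positive dependency graph: from `a` to `b` whenever some rule
has head `b` and `a` in its positive body. -/
def depEdge {A : Type*} (R : Set (ASPRule A)) (a b : A) : Prop :=
  ∃ r ∈ R, r.head = some b ∧ a ∈ r.pos

/-- `P1` and `P2` are mutually independent: no cycle of the positive dependency
graph of `R1 ∪ R2` passes through atoms of both `At(P1)` and `At(P2)`. -/
def mutuallyIndependent {A : Type*} (P1 P2 : PreModule A) : Prop :=
  ¬ ∃ x y, x ∈ P1.atoms ∧ y ∈ P2.atoms ∧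
      Relation.TransGen (depEdge (P1.rules ∪ P2.rules)) x y ∧
      Relation.TransGen (depEdge (P1.rules ∪ P2.rules)) y x

/-- Composition `P1 ⊕ P2`. -/
def oplus {A : Type*} (P1 P2 : PreModule A) : PreModule A :=
  ⟨P1.rules ∪ P2.rules, (P1.I \ P2.O) ∪ (P2.I \ P1.O), P1.O ∪ P2.O, P1.H ∪ P2.H⟩

/-- `P1 ⊕ P2` is defined. -/
def oplusDefined {A : Type*} (P1 P2 : PreModule A) : Prop :=
  P1.O ∩ P2.O = ∅ ∧ P1.H ∩ P2.atoms = ∅ ∧ P2.H ∩ P1.atoms = ∅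

/-- The module union `P1 ⊔ P2` is defined: `P1 ⊕ P2` is defined and `P1`, `P2`
are mutually independent (in which case `P1 ⊔ P2 = P1 ⊕ P2`). -/
def sqcupDefined {A : Type*} (P1 P2 : PreModule A) : Prop :=
  oplusDefined P1 P2 ∧ mutuallyIndependent P1 P2

/-- Natural join of sets of interpretations w.r.t. modules `P1`, `P2`. -/
def natJoin {A : Type*} (P1 P2 : PreModule A) (A1 A2 : Set (Set A)) : Set (Set A) :=
  {M | ∃ M1 ∈ A1, ∃ M2 ∈ A2, M1 ∩ P2.Atv = M2 ∩ P1.Atv ∧ M = M1 ∪ M2}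

/-- Relaxed composition `P1 ⊎ P2` (common output atoms allowed). -/
def uplus {A : Type*} (P1 P2 : PreModule A) : PreModule A :=
  ⟨P1.rules ∪ P2.rules, (P1.I ∪ P2.I) \ (P1.O ∪ P2.O), P1.O ∪ P2.O, P1.H ∪ P2.H⟩

/-- `P1 ⊎ P2` is defined: the modules respect each other's hidden atoms. -/
def uplusDefined {A : Type*} (P1 P2 : PreModule A) : Prop :=
  P1.H ∩ P2.atoms = ∅ ∧ P2.H ∩ P1.atoms = ∅

/-- Hiding a set `S` of atoms in a module. -/
def hideS {A : Type*} (P : PreModule A) (S : Set A) : PreModule A :=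
  ⟨P.rules ∪ choiceFacts (P.I ∩ S), P.I \ S, P.O \ S, P.H ∪ (P.Atv ∩ S)⟩

/-- Projecting a module onto a set `S` of atoms. -/
def projectS {A : Type*} (P : PreModule A) (S : Set A) : PreModule A :=
  ⟨P.rules ∪ choiceFacts (P.I \ S), P.I ∩ S, P.O ∩ S, P.H ∪ (P.Atv \ S)⟩

/-- Renaming the head `o` of a rule to `o'`. -/
def renameRule {A : Type*} (o o' : A) (r : ASPRule A) : ASPRule A :=
  if r.head = some o then { r with head := some o' } else r

/-- Renamed output module `ρ_{o'←o}(P)`. -/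
def renameOut {A : Type*} (P : PreModule A) (o o' : A) : PreModule A :=
  ⟨(renameRule o o' '' P.rules) ∪ {⟨none, false, {o'}, {o}⟩},
   P.I ∪ {o}, {o'} ∪ (P.O \ {o}), P.H⟩

/-- Renaming heads in a rule for every atom of `Os`, via `f`. -/
def renameRuleS {A : Type*} (Os : Set A) (f : A → A) (r : ASPRule A) : ASPRule A :=
  { r with head := r.head.map fun a => if a ∈ Os then f a else a }

/-- Renamed output module `ρ_{O'←O}(P)` where `O' = f '' Os` atom by atom. -/
def renameOutS {A : Type*} (P : PreModule A) (Os : Set A) (f : A → A) : PreModule A :=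
  ⟨(renameRuleS Os f '' P.rules) ∪ {r | ∃ o ∈ Os, r = ⟨none, false, {f o}, {o}⟩},
   P.I ∪ Os, (f '' Os) ∪ (P.O \ Os), P.H⟩

/-- The module `P_union` with rules `o ← o'` and `o ← o''` for each `o ∈ Os`,
where `o' = f' o` and `o'' = f'' o`. -/
def Punion {A : Type*} (Os : Set A) (f' f'' : A → A) : PreModule A :=
  ⟨{r | ∃ o ∈ Os, r = ⟨some o, false, {f' o}, ∅⟩ ∨ r = ⟨some o, false, {f'' o}, ∅⟩},
   (f' '' Os) ∪ (f'' '' Os), Os, ∅⟩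

/-- The module `P_filter` with constraints `⊥ ← o', not o''` and `⊥ ← not o', o''`. -/
def Pfilter {A : Type*} (Os : Set A) (f' f'' : A → A) : PreModule A :=
  ⟨{r | ∃ o ∈ Os, r = ⟨none, false, {f' o}, {f'' o}⟩ ∨ r = ⟨none, false, {f'' o}, {f' o}⟩},
   (f' '' Os) ∪ (f'' '' Os), ∅, ∅⟩

/-- Transformed relaxed composition `P1 ⊎^RT P2`, with fresh primed and
double-primed atoms given by `f'` and `f''` on `O = O1 ∩ O2`. -/
def uplusRT {A : Type*} (P1 P2 : PreModule A) (f' f'' : A → A) : PreModule A :=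
  hideS
    (oplus (oplus (renameOutS P1 (P1.O ∩ P2.O) f') (renameOutS P2 (P1.O ∩ P2.O) f''))
      (Punion (P1.O ∩ P2.O) f' f''))
    ((f' '' (P1.O ∩ P2.O)) ∪ (f'' '' (P1.O ∩ P2.O)))

/-- Conservative composition `P1 ⊗ P2`, with fresh primed and double-primed
atoms given by `f'` and `f''` on `O = O1 ∩ O2`. -/
def otimesC {A : Type*} (P1 P2 : PreModule A) (f' f'' : A → A) : PreModule A :=
  hideS
    (oplus
      (oplus (oplus (renameOutS P1 (P1.O ∩ P2.O) f') (renameOutS P2 (P1.O ∩ P2.O) f''))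
        (Punion (P1.O ∩ P2.O) f' f''))
      (Pfilter (P1.O ∩ P2.O) f' f''))
    ((f' '' (P1.O ∩ P2.O)) ∪ (f'' '' (P1.O ∩ P2.O)))

/-- The atoms `O' = f' '' (O1 ∩ O2)` and `O'' = f'' '' (O1 ∩ O2)` are fresh:
`f'`, `f''` are injective on `O1 ∩ O2`, the images avoid all atoms of `P1` and
`P2`, and the two images are disjoint. -/
def freshPair {A : Type*} (P1 P2 : PreModule A) (f' f'' : A → A) : Prop :=
  Set.InjOn f' (P1.O ∩ P2.O) ∧ Set.InjOn f'' (P1.O ∩ P2.O) ∧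
  (f' '' (P1.O ∩ P2.O)) ∩ (P1.atoms ∪ P2.atoms) = ∅ ∧
  (f'' '' (P1.O ∩ P2.O)) ∩ (P1.atoms ∪ P2.atoms) = ∅ ∧
  (f' '' (P1.O ∩ P2.O)) ∩ (f'' '' (P1.O ∩ P2.O)) = ∅

/-- Modular equivalence `P ≡_m Q`: same input signature, same visible atoms,
and a bijection between the stable models preserving the visible parts. -/
def modEquiv {A : Type*} (P Q : PreModule A) : Prop :=
  P.I = Q.I ∧ P.Atv = Q.Atv ∧
  ∃ f : Set A → Set A, Set.BijOn f P.AS Q.AS ∧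
    ∀ M ∈ P.AS, M ∩ P.Atv = f M ∩ Q.Atv

end

/-!
Relative to a fixed interpretation `M`, asserting the atoms of `M ∩ X` as facts and offering choice
facts for all of `X` have the same effect on the reduct, and neither adds an integrity constraint.
Hence the stable models of a module are those of its rules together with choice facts for all of
its inputs. Projecting onto `S` merely makes the choices for `I \ S` explicit.
-/

section Projection

variable {A : Type*}

theorem reduct_union (R Q : Set (ASPRule A)) (M : Set A) :
    reduct (R ∪ Q) M = reduct R M ∪ reduct Q M := by
  ext p
  simp only [reduct, Set.mem_union, Set.mem_ofPred_eq, or_and_right, exists_or]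

theorem reduct_inputFacts (X M : Set A) : reduct (inputFacts X) M = X ×ˢ {∅} := by
  ext ⟨a, B⟩
  simp [reduct, inputFacts, eq_comm (a := (∅ : Set A))]

theorem reduct_choiceFacts (X M : Set A) : reduct (choiceFacts X) M = (X ∩ M) ×ˢ {∅} := by
  ext ⟨a, B⟩
  simp [reduct, choiceFacts, and_assoc, and_comm, and_left_comm]

theorem head_ne_none_of_mem_inputFacts {X : Set A} {r : ASPRule A} (hr : r ∈ inputFacts X) :
    r.head ≠ none := by
  obtain ⟨a, -, rfl⟩ := hr
  exact Option.some_ne_none a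

theorem head_ne_none_of_mem_choiceFacts {X : Set A} {r : ASPRule A} (hr : r ∈ choiceFacts X) :
    r.head ≠ none := by
  obtain ⟨a, -, rfl⟩ := hr
  exact Option.some_ne_none a

theorem choiceFacts_union (X Y : Set A) :
    choiceFacts (X ∪ Y) = choiceFacts X ∪ choiceFacts Y := by
  ext r
  simp only [choiceFacts, Set.mem_union, Set.mem_ofPred_eq, or_and_right, exists_or]

theorem stableModel_union_congr {R Q Q' : Set (ASPRule A)} {M : Set A}
    (hQ : ∀ r ∈ Q, r.head ≠ none) (hQ' : ∀ r ∈ Q', r.head ≠ none)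
    (hred : reduct Q M = reduct Q' M) :
    stableModel (R ∪ Q) M ↔ stableModel (R ∪ Q') M := by
  have constraints_iff {T : Set (ASPRule A)} (hT : ∀ r ∈ T, r.head ≠ none) :
      (∀ r ∈ R ∪ T, r.head = none → r.neg ∩ M = ∅ → ¬ r.pos ⊆ M) ↔
        ∀ r ∈ R, r.head = none → r.neg ∩ M = ∅ → ¬ r.pos ⊆ M :=
    ⟨fun h r hr ↦ h r (Or.inl hr),
      fun h r hr hhead ↦ h r (hr.resolve_right fun hrT ↦ hT r hrT hhead) hhead⟩
  simp only [stableModel, reduct_union, hred, constraints_iff hQ, constraints_iff hQ']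

theorem stableModel_union_inputFacts_iff_choiceFacts (R : Set (ASPRule A)) (X M : Set A) :
    stableModel (R ∪ inputFacts (M ∩ X)) M ↔ stableModel (R ∪ choiceFacts X) M :=
  stableModel_union_congr (fun _ ↦ head_ne_none_of_mem_inputFacts)
    (fun _ ↦ head_ne_none_of_mem_choiceFacts) <| by
      rw [reduct_inputFacts, reduct_choiceFacts, Set.inter_comm]

theorem PreModule.mem_AS_iff_stableModel_choiceFacts {P : PreModule A} {M : Set A} :
    M ∈ P.AS ↔ M ⊆ P.atoms ∧ stableModel (P.rules ∪ choiceFacts P.I) M :=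
  and_congr_right fun _ ↦ stableModel_union_inputFacts_iff_choiceFacts P.rules P.I M

theorem rules_projectS_union_choiceFacts (P : PreModule A) (S : Set A) :
    (projectS P S).rules ∪ choiceFacts (projectS P S).I = P.rules ∪ choiceFacts P.I := by
  simp only [projectS, Set.union_assoc, ← choiceFacts_union, Set.sdiff_union_inter]

theorem Atv_projectS (P : PreModule A) (S : Set A) : (projectS P S).Atv = P.Atv ∩ S :=
  (Set.union_inter_distrib_right P.I P.O S).symm

theorem atoms_projectS (P : PreModule A) (S : Set A) : (projectS P S).atoms = P.atoms :=
  calc (projectS P S).Atv ∪ (P.H ∪ P.Atv \ S)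
    _ = P.Atv ∩ S ∪ P.Atv \ S ∪ P.H := by rw [Atv_projectS, Set.union_comm P.H, Set.union_assoc]
    _ = P.Atv ∪ P.H := by rw [Set.inter_union_sdiff]

theorem AS_projectS (P : PreModule A) (S : Set A) : (projectS P S).AS = P.AS := by
  ext M
  simp only [PreModule.mem_AS_iff_stableModel_choiceFacts, atoms_projectS,
    rules_projectS_union_choiceFacts]

theorem project_AS_and_visible_general (P : PreModule A) (S : Set A) :
    (projectS P S).AS = P.AS ∧ (projectS P S).Atv = P.Atv ∩ S :=
  ⟨AS_projectS P S, Atv_projectS P S⟩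

end Projection

/-- Projecting a module onto a set `S` of atoms does not change the stable
models but restricts the visible signature to `S`. -/
theorem project_AS_and_visible {A : Type*} (P : PreModule A) (hwf : P.wf) (S : Set A) :
    (projectS P S).AS = P.AS ∧ (projectS P S).Atv = P.Atv ∩ S :=
  project_AS_and_visible_general P S
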